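/- For every integer r ≥ 1 and every natural number n, the number of Dyck-type paths from (0,0) to (2n,0) staying weakly above the x-axis and containing no r consecutive down-steps, multiplied by n+1, equals the Euler coefficient ⟨n+1 choose n⟩_r. -/

import Mathlib

/-- `dyckCount r a b` is the number of lattice paths from `(0,0)` to `(a+b, a-b)`
(encoded as words in `true` = up-step `(1,1)` and `false` = down-step `(1,-1)`,
with `a` up-steps and `b` down-steps) that stay weakly above the `x`-axis and
contain no `r` consecutive down-steps. -/
noncomputable def dyckCount (r a b : ℕ) : ℕ :=
  Set.ncard {p : List Bool |
    p.count true = a ∧ p.count false = b ∧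
    (∀ q : List Bool, q <+: p → q.count false ≤ q.count true) ∧
    ¬ List.replicate r false <:+: p}

/-- The Euler coefficient `⟨n choose k⟩_r`: the coefficient of `t^k` in the
polynomial `(1 + t + t^2 + ⋯ + t^(r-1))^n`, viewed as an integer. -/
noncomputable def eulerCoeff (r n k : ℕ) : ℤ :=
  ((∑ i ∈ Finset.range r, (Polynomial.X : Polynomial ℤ) ^ i) ^ n).coeff k

/-!
Cutting a path at its last up-step shows that the numbers `N(a, b)` of admissible paths with `a`
up-steps and `b` down-steps satisfy `N(a + 1, b) = ∑_{j < r} N(a, b - j)` for `b ≤ a + 1`. The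
numbers `(m - s) / m * ⟨m choose s⟩_r` with `m = a + 1` and `s = b` satisfy the same recurrence: for
`G = 1 + t + ⋯ + t^(r-1)`, subtract the coefficients of `t^s` in
`(m + 1) * G * t(G^m)' = m * t(G^(m+1))'` from `m * (m + 1)` times those in `G * G^m = G^(m+1)`.
Both families agree for `a = 0` and vanish for `b = a + 1`.
-/

open Finset Polynomial

section Lists

variable {α : Type*} {a : α}

lemma exists_eq_append_cons_notMem_of_mem {l : List α} (h : a ∈ l) :
    ∃ s t, l = s ++ a :: t ∧ a ∉ t := by
  obtain ⟨s, t, hl, hs⟩ := List.eq_append_cons_of_mem (List.mem_reverse.2 h)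
  exact ⟨t.reverse, s.reverse, by simpa using congrArg List.reverse hl, by simpa using hs⟩

lemma append_cons_inj_of_notMem_right {s s' t t' : List α} (ht : a ∉ t) (ht' : a ∉ t')
    (h : s ++ a :: t = s' ++ a :: t') : s = s' ∧ t = t' := by
  rcases List.append_eq_append_iff.1 h with ⟨u, rfl, hu⟩ | ⟨u, rfl, hu⟩ <;> cases u <;> simp_all

lemma infix_append_cons_iff_of_notMem {l s t : List α} (hl : a ∉ l) :
    l <:+: s ++ a :: t ↔ l <:+: s ∨ l <:+: t := by
  have eq_nil_of_prefix {l' : List α} (hpre : l' <+: a :: t) (hl' : a ∉ l') : l' = [] := by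
    rcases List.prefix_cons_iff.1 hpre with rfl | ⟨u, rfl, -⟩
    · rfl
    · simp at hl'
  refine ⟨fun h ↦ ?_, ?_⟩
  · rcases List.infix_append_iff.1 h with h | h | ⟨l₁, l₂, rfl, h₁, h₂⟩
    · exact .inl h
    · refine (List.infix_cons_iff.1 h).imp (fun hpre ↦ ?_) id
      exact eq_nil_of_prefix hpre hl ▸ List.nil_infix
    · obtain rfl : l₂ = [] := eq_nil_of_prefix h₂ fun ha ↦ hl (List.mem_append_right l₁ ha)
      exact .inl (by simpa using h₁.isInfix)
  · rintro (h | h)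
    · exact List.infix_append_of_infix_left h
    · exact List.infix_append_of_infix_right (List.infix_cons h)

end Lists

section BallotWords

/-- Ballot words: the words in up-steps `true` and down-steps `false` whose lattice path from the
origin stays weakly above the `x`-axis. -/
def IsBallot (p : List Bool) : Prop :=
  ∀ q : List Bool, q <+: p → q.count false ≤ q.count true

lemma isBallot_concat_iff {p : List Bool} {x : Bool} :
    IsBallot (p ++ [x]) ↔ IsBallot p ∧ (p ++ [x]).count false ≤ (p ++ [x]).count true := by
  simp only [IsBallot, List.prefix_concat_iff, forall_eq_or_imp, and_comm]

/-- The word `q u d ^ k` for an up-step `u` and a down-step `d`: every word with an up-step has this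
form for a unique pair `(q, k)`, where `k` is the length of its final run of down-steps. -/
def appendUpDowns (q : List Bool) (k : ℕ) : List Bool :=
  q ++ true :: List.replicate k false

lemma appendUpDowns_succ (q : List Bool) (k : ℕ) :
    appendUpDowns q (k + 1) = appendUpDowns q k ++ [false] := by
  simp [appendUpDowns, List.replicate_succ']

lemma count_true_appendUpDowns (q : List Bool) (k : ℕ) :
    (appendUpDowns q k).count true = q.count true + 1 := by
  simp [appendUpDowns, List.count_replicate]

lemma count_false_appendUpDowns (q : List Bool) (k : ℕ) :
    (appendUpDowns q k).count false = q.count false + k := by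
  simp [appendUpDowns]

lemma appendUpDowns_inj {q q' : List Bool} {k k' : ℕ} :
    appendUpDowns q k = appendUpDowns q' k' ↔ q = q' ∧ k = k' := by
  refine ⟨fun h ↦ ?_, fun ⟨hq, hk⟩ ↦ hq ▸ hk ▸ rfl⟩
  simpa using append_cons_inj_of_notMem_right (by simp) (by simp) h

lemma exists_eq_appendUpDowns_of_mem {p : List Bool} (h : true ∈ p) :
    ∃ q k, p = appendUpDowns q k := by
  obtain ⟨q, t, rfl, ht⟩ := exists_eq_append_cons_notMem_of_mem h
  have hrep : t = List.replicate t.length false :=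
    List.eq_replicate_length.2 fun x hx ↦ Bool.eq_false_iff.2 fun hx' ↦ ht (hx' ▸ hx)
  exact ⟨q, t.length, congrArg (q ++ true :: ·) hrep⟩

lemma replicate_false_infix_appendUpDowns_iff {r k : ℕ} {q : List Bool} :
    List.replicate r false <:+: appendUpDowns q k ↔ List.replicate r false <:+: q ∨ r ≤ k := by
  rw [appendUpDowns, infix_append_cons_iff_of_notMem (by simp), List.infix_replicate_iff]
  simp

lemma isBallot_appendUpDowns_iff {q : List Bool} {k : ℕ} :
    IsBallot (appendUpDowns q k) ↔ IsBallot q ∧ q.count false + k ≤ q.count true + 1 := by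
  induction k with
  | zero => simp [appendUpDowns, isBallot_concat_iff]
  | succ k ih =>
    rw [appendUpDowns_succ, isBallot_concat_iff, ← appendUpDowns_succ, ih,
      count_true_appendUpDowns, count_false_appendUpDowns, and_assoc]
    exact and_congr_right fun _ ↦ and_iff_right_of_imp Nat.le_of_succ_le

/-- The words counted by `dyckCount r a b`. -/
def dyckWords (r a b : ℕ) : Set (List Bool) :=
  {p | p.count true = a ∧ p.count false = b ∧ IsBallot p ∧ ¬ List.replicate r false <:+: p}

lemma length_eq_of_mem_dyckWords {r a b : ℕ} {p : List Bool} (hp : p ∈ dyckWords r a b) :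
    p.length = a + b := by
  rw [← hp.1, ← hp.2.1, List.count_true_add_count_false]

lemma finite_dyckWords (r a b : ℕ) : (dyckWords r a b).Finite :=
  (List.finite_length_eq Bool (a + b)).subset fun _ ↦ length_eq_of_mem_dyckWords

lemma dyckWords_eq_empty_of_lt (r : ℕ) {a b : ℕ} (h : a < b) : dyckWords r a b = ∅ := by
  refine Set.eq_empty_of_forall_notMem fun p ⟨htrue, hfalse, hballot, _⟩ ↦ ?_
  have := hballot p List.prefix_rfl
  omega

lemma mem_dyckWords_zero_zero_iff {r : ℕ} {p : List Bool} :
    p ∈ dyckWords r 0 0 ↔ p = [] ∧ 0 < r := by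
  refine ⟨fun hp ↦ ?_, ?_⟩
  · obtain rfl : p = [] := List.length_eq_zero_iff.1 (length_eq_of_mem_dyckWords hp)
    simpa [Nat.pos_iff_ne_zero] using hp.2.2.2
  · rintro ⟨rfl, hr⟩
    simpa [dyckWords, IsBallot] using hr.ne'

lemma appendUpDowns_mem_dyckWords_iff {r a b k : ℕ} {q : List Bool} :
    appendUpDowns q k ∈ dyckWords r (a + 1) (k + b) ↔
      q ∈ dyckWords r a b ∧ k < r ∧ k + b ≤ a + 1 := by
  simp only [dyckWords, Set.mem_ofPred_eq, count_true_appendUpDowns, count_false_appendUpDowns,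
    isBallot_appendUpDowns_iff, replicate_false_infix_appendUpDowns_iff]
  grind

lemma dyckWords_succ (r : ℕ) {a b : ℕ} (hb : b ≤ a + 1) :
    dyckWords r (a + 1) b = ⋃ x ∈ {x ∈ antidiagonal b | x.1 < r},
      (appendUpDowns · x.1) '' dyckWords r a x.2 := by
  ext p
  simp only [Set.mem_iUnion, Set.mem_image, mem_filter, HasAntidiagonal.mem_antidiagonal,
    exists_prop]
  refine ⟨fun hp ↦ ?_, ?_⟩
  · have hmem : true ∈ p := List.count_pos_iff.1 (hp.1 ▸ a.succ_pos)
    obtain ⟨q, k, rfl⟩ := exists_eq_appendUpDowns_of_mem hmem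
    have hk : k ≤ b := hp.2.1 ▸ count_false_appendUpDowns q k ▸ Nat.le_add_left k _
    obtain ⟨c, rfl⟩ := Nat.exists_eq_add_of_le hk
    obtain ⟨hq, hkr, -⟩ := appendUpDowns_mem_dyckWords_iff.1 hp
    exact ⟨(k, c), ⟨rfl, hkr⟩, q, hq, rfl⟩
  · rintro ⟨⟨k, c⟩, ⟨rfl, hkr⟩, q, hq, rfl⟩
    exact appendUpDowns_mem_dyckWords_iff.2 ⟨hq, hkr, hb⟩

lemma dyckCount_eq_ncard (r a b : ℕ) : dyckCount r a b = (dyckWords r a b).ncard := rfl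

lemma dyckCount_eq_zero_of_lt (r : ℕ) {a b : ℕ} (h : a < b) : dyckCount r a b = 0 := by
  rw [dyckCount_eq_ncard, dyckWords_eq_empty_of_lt r h, Set.ncard_empty]

lemma dyckCount_zero_zero (r : ℕ) : dyckCount r 0 0 = if 0 < r then 1 else 0 := by
  rw [dyckCount_eq_ncard]
  split_ifs with hr
  · exact Set.ncard_eq_one.2 ⟨[], by ext p; simp [mem_dyckWords_zero_zero_iff, hr]⟩
  · rw [Set.eq_empty_of_forall_notMem fun p hp ↦ hr (mem_dyckWords_zero_zero_iff.1 hp).2,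
      Set.ncard_empty]

lemma dyckCount_succ (r : ℕ) {a b : ℕ} (hb : b ≤ a + 1) :
    dyckCount r (a + 1) b = ∑ x ∈ antidiagonal b with x.1 < r, dyckCount r a x.2 := by
  simp only [dyckCount_eq_ncard]
  rw [dyckWords_succ r hb, ← finsum_mem_coe_finset]
  refine ((finite_toSet _).ncard_biUnion
    (fun x _ ↦ (finite_dyckWords r a x.2).image _) fun x hx y hy hxy ↦ ?_).trans ?_
  · refine Set.disjoint_left.2 ?_
    rintro _ ⟨q, _, rfl⟩ ⟨q', _, h⟩
    have hx' := (mem_filter.1 hx).1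
    have hy' := (mem_filter.1 hy).1
    refine hxy ((HasAntidiagonal.antidiagonal_congr hx' hy').2 ?_)
    exact (appendUpDowns_inj.1 h).2.symm
  · exact finsum_mem_congr rfl fun x _ ↦
      Set.ncard_image_of_injective _ fun q q' h ↦ (appendUpDowns_inj.1 h).1

end BallotWords

section Coefficients

lemma coeff_X_mul_derivative {R : Type*} [Semiring R] (f : R[X]) (n : ℕ) :
    (X * derivative f).coeff n = f.coeff n * n := by
  cases n with
  | zero => simp
  | succ n => simp [coeff_X_mul, coeff_derivative]

lemma succ_mul_mul_derivative_pow {R : Type*} [CommSemiring R] (f : R[X]) (m : ℕ) :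
    ((m + 1 : ℕ) : R[X]) * (f * derivative (f ^ m)) = m * derivative (f ^ (m + 1)) := by
  cases m with
  | zero => simp
  | succ m =>
    simp only [derivative_pow_succ, map_add, map_natCast, map_one, Nat.cast_succ]
    ring

lemma succ_mul_sum_antidiagonal_coeff_mul_coeff_pow {R : Type*} [CommSemiring R] (f : R[X])
    (m s : ℕ) :
    ((m + 1 : ℕ) : R) * ∑ x ∈ antidiagonal s, f.coeff x.1 * ((f ^ m).coeff x.2 * x.2) =
      m * ((f ^ (m + 1)).coeff s * s) := by
  have hderiv : ((m + 1 : ℕ) : R[X]) * (f * (X * derivative (f ^ m))) =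
      (m : R[X]) * (X * derivative (f ^ (m + 1))) := by
    simp only [mul_left_comm _ X, succ_mul_mul_derivative_pow]
  simp only [← coeff_X_mul_derivative, ← coeff_mul]
  simpa only [coeff_natCast_mul] using congrArg (coeff · s) hderiv

lemma coeff_sum_range_X_pow {R : Type*} [Semiring R] (r n : ℕ) :
    (∑ i ∈ range r, (X : R[X]) ^ i).coeff n = if n < r then 1 else 0 := by
  simp [coeff_X_pow]

lemma eulerCoeff_one (r k : ℕ) : eulerCoeff r 1 k = if k < r then 1 else 0 := by
  rw [eulerCoeff, pow_one, coeff_sum_range_X_pow]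

lemma eulerCoeff_succ (r m s : ℕ) :
    eulerCoeff r (m + 1) s = ∑ x ∈ antidiagonal s with x.1 < r, eulerCoeff r m x.2 := by
  simp only [eulerCoeff, pow_succ', coeff_mul, coeff_sum_range_X_pow, sum_filter, ite_mul, one_mul,
    zero_mul]

lemma succ_mul_sum_eulerCoeff_mul (r m s : ℕ) :
    (m + 1) * ∑ x ∈ antidiagonal s with x.1 < r, eulerCoeff r m x.2 * x.2 =
      m * (eulerCoeff r (m + 1) s * s) := by
  simpa only [coeff_sum_range_X_pow, sum_filter, ite_mul, one_mul, zero_mul, Nat.cast_succ] using!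
    succ_mul_sum_antidiagonal_coeff_mul_coeff_pow (∑ i ∈ range r, (X : ℤ[X]) ^ i) m s

lemma succ_mul_sum_sub_mul_eulerCoeff (r m s : ℕ) :
    ((m : ℤ) + 1) * ∑ x ∈ antidiagonal s with x.1 < r, ((m : ℤ) - x.2) * eulerCoeff r m x.2 =
      m * ((m + 1 - s) * eulerCoeff r (m + 1) s) := by
  have hsplit : ∑ x ∈ antidiagonal s with x.1 < r, ((m : ℤ) - x.2) * eulerCoeff r m x.2 =
      m * eulerCoeff r (m + 1) s - ∑ x ∈ antidiagonal s with x.1 < r, eulerCoeff r m x.2 * x.2 := by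
    rw [eulerCoeff_succ, mul_sum, ← sum_sub_distrib]
    exact sum_congr rfl fun x _ ↦ by ring
  linear_combination ((m : ℤ) + 1) * hsplit - succ_mul_sum_eulerCoeff_mul r m s

end Coefficients

theorem dyck_avoiding_down_runs_general (r : ℕ) {a b : ℕ} (hb : b ≤ a + 1) :
    ((a : ℤ) + 1) * dyckCount r a b = (a + 1 - b) * eulerCoeff r (a + 1) b := by
  induction a generalizing b with
  | zero =>
    interval_cases b
    · simp [dyckCount_zero_zero, eulerCoeff_one]
    · simp [dyckCount_eq_zero_of_lt]
  | succ a ih =>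
    rcases hb.eq_or_lt with rfl | hlt
    · simp [dyckCount_eq_zero_of_lt]
    have hle : b ≤ a + 1 := Nat.lt_succ_iff.1 hlt
    have hsum : ((a : ℤ) + 1) * dyckCount r (a + 1) b =
        ∑ x ∈ antidiagonal b with x.1 < r, ((a : ℤ) + 1 - x.2) * eulerCoeff r (a + 1) x.2 := by
      rw [dyckCount_succ r hle, Nat.cast_sum, mul_sum]
      refine sum_congr rfl fun x hx ↦ ih ?_
      exact (HasAntidiagonal.antidiagonal.snd_le (mem_filter.1 hx).1).trans hle
    have hrec := succ_mul_sum_sub_mul_eulerCoeff r (a + 1) b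
    have hpos : (a : ℤ) + 1 ≠ 0 := by positivity
    apply mul_left_cancel₀ hpos
    push_cast at hrec ⊢
    linear_combination ((a : ℤ) + 2) * hsum + hrec

/-- The number of Dyck-type paths from `(0,0)` to `(2n,0)` staying weakly above the
`x`-axis with no `r` consecutive down-steps, multiplied by `n+1`, equals
`⟨n+1 choose n⟩_r`. -/
theorem dyck_avoiding_down_runs (r : ℕ) (hr : 1 ≤ r) (n : ℕ) :
    ((n : ℤ) + 1) * dyckCount r n n = eulerCoeff r (n + 1) n := by
  simpa using dyck_avoiding_down_runs_general r n.le_succ
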